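/- For every n ≥ 1, Σ over all compositions (p_1,…,p_k) of n of the term (n!/(p_1!·⋯·p_k!))·w(p_1,…,p_k) equals Σ_{i=0}^{n−1} n!/i!, where the weight is w(p_1) = p_1 for compositions of length k = 1, and w(p_1,…,p_k) = p_1·(p_2−1)·⋯·(p_{k−1}−1)·p_k for compositions of length k ≥ 2. -/

import Mathlib

/-!
Divide the identity by `n!`, so that everything becomes a sum over compositions of a weight which
is multiplicative in the blocks. A composition of `n ≥ 1` is a first block `p` followed by a
composition of `n - p` (`sum_composition_succ`).

Let `tailWeight` be the normalised weight in which every block `q` but the last contributes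
`(q-1)/q!` and the last contributes `q/q!`. Its sum over the compositions of any `n ≥ 1` is `1`:
by strong induction, removing the first block gives
`n/n! + ∑_{1 ≤ p < n} (p-1)/p!`, which telescopes because `(p-1)/p! = 1/(p-1)! - 1/p!`.
(Equivalently, the generating function is `x eˣ / (1 - (x eˣ - eˣ + 1)) = x/(1-x)`.)

Removing the first block of a composition in the original sum leaves the factor `p/p!` times a sum
of `tailWeight`, so the normalised total is `∑_{1 ≤ p ≤ n} p/p! = ∑_{i<n} 1/i!`.
-/


/-- The weight of a composition `(p₁,…,p_k)`: `w(p₁) = p₁` for `k = 1`, and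
`w(p₁,…,p_k) = p₁·(p₂-1)·⋯·(p_{k-1}-1)·p_k` for `k ≥ 2`. -/
def w (l : List ℕ) : ℕ :=
  match l with
  | [] => 1
  | [p] => p
  | p :: rest => p * (rest.dropLast.map fun q => q - 1).prod * rest.getLastD 1

open Finset

/-- The composition of `n + 1` with first block `p + 1` followed by a composition of `n - p`. -/
def consComposition (n : ℕ) (x : (p : Fin (n + 1)) × Composition (n - p)) :
    Composition (n + 1) where
  blocks := (x.1 + 1) :: x.2.blocks
  blocks_pos := by
    intro i hi
    rcases List.mem_cons.1 hi with h | h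
    · omega
    · exact x.2.blocks_pos h
  blocks_sum := by
    have := x.1.2
    rw [List.sum_cons, x.2.blocks_sum]
    omega

lemma consComposition_bijective (n : ℕ) : Function.Bijective (consComposition n) := by
  constructor
  · rintro ⟨p, c⟩ ⟨q, d⟩ h
    have h' := congrArg Composition.blocks h
    simp only [consComposition, List.cons.injEq, add_left_inj] at h'
    obtain ⟨h1, h2⟩ := h'
    obtain rfl : p = q := Fin.ext h1
    obtain rfl : c = d := Composition.ext h2
    rfl
  · rintro ⟨l, hpos, hsum⟩
    cases l with
    | nil => simp at hsum
    | cons a l =>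
      have ha : 0 < a := hpos (by simp)
      rw [List.sum_cons] at hsum
      refine ⟨⟨⟨a - 1, by omega⟩, ⟨l, fun h => hpos (List.mem_cons_of_mem _ h), ?_⟩⟩, ?_⟩
      · simp only
        omega
      · apply Composition.ext
        simp only [consComposition, List.cons.injEq, and_true]
        omega

/-- Splitting off the first block of a composition. -/
lemma sum_composition_succ (n : ℕ) (f : List ℕ → ℚ) :
    ∑ c : Composition (n + 1), f c.blocks =
      ∑ p ∈ range (n + 1), ∑ c : Composition (n - p), f ((p + 1) :: c.blocks) := by
  rw [← (consComposition_bijective n).sum_comp, Fintype.sum_sigma, sum_range]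
  rfl

lemma sum_composition_zero (f : List ℕ → ℚ) : ∑ c : Composition 0, f c.blocks = f [] := by
  have h (c : Composition 0) : c.blocks = [] := c.blocks_eq_nil.2 rfl
  simp [h, composition_card]

/-- The product of `(q-1)/q!` over all blocks `q` but the last, times `q/q!` for the last one. -/
def tailWeight (l : List ℕ) : ℚ :=
  (((l.dropLast.map fun q => q - 1).prod * l.getLastD 1 : ℕ) : ℚ) /
    ((l.map Nat.factorial).prod : ℕ)

lemma tailWeight_cons (p : ℕ) {l : List ℕ} (hl : l ≠ []) :
    tailWeight ((p + 1) :: l) = (p : ℚ) / (p + 1).factorial * tailWeight l := by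
  obtain ⟨a, l, rfl⟩ := List.exists_cons_of_ne_nil hl
  have h : ((p + 1) :: a :: l).getLastD 1 = (a :: l).getLastD 1 := by simp
  rw [tailWeight, h, List.dropLast_cons_cons, List.map_cons, List.prod_cons, List.map_cons,
    List.prod_cons, tailWeight, div_mul_div_comm]
  push_cast
  simp only [mul_assoc]

lemma w_cons (p : ℕ) {l : List ℕ} (hl : l ≠ []) :
    (w (p :: l) : ℚ) / (((p :: l).map Nat.factorial).prod : ℕ) =
      (p : ℚ) / p.factorial * tailWeight l := by
  obtain ⟨a, l, rfl⟩ := List.exists_cons_of_ne_nil hl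
  rw [w, List.map_cons, List.prod_cons, tailWeight, div_mul_div_comm]
  · push_cast
    simp only [mul_assoc]
  · simp

lemma succ_div_factorial (p : ℕ) :
    ((p + 1 : ℕ) : ℚ) / (p + 1).factorial = 1 / p.factorial := by
  rw [Nat.factorial_succ]
  have := Nat.factorial_ne_zero p
  push_cast
  field_simp

lemma blocks_ne_nil {n : ℕ} (hn : 0 < n) (c : Composition n) : c.blocks ≠ [] :=
  fun h => hn.ne' (c.blocks_eq_nil.1 h)

lemma sum_tailWeight (n : ℕ) : ∑ c : Composition (n + 1), tailWeight c.blocks = 1 := by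
  induction n using Nat.strong_induction_on with
  | _ n ih =>
    have hlast : ∑ c : Composition (n - n), tailWeight ((n + 1) :: c.blocks)
        = 1 / n.factorial := by
      rw [Nat.sub_self, sum_composition_zero fun l => tailWeight ((n + 1) :: l),
        ← succ_div_factorial]
      simp [tailWeight]
    have hfirst : ∀ p ∈ range n, ∑ c : Composition (n - p), tailWeight ((p + 1) :: c.blocks)
        = 1 / p.factorial - 1 / (p + 1).factorial := by
      intro p hp
      have hp' := mem_range.1 hp
      rw [sum_congr rfl fun c _ => tailWeight_cons p (blocks_ne_nil (by omega) c), ← mul_sum]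
      obtain ⟨m, hm⟩ : ∃ m, n - p = m + 1 := ⟨n - p - 1, by omega⟩
      rw [hm, ih m (by omega), ← succ_div_factorial]
      push_cast
      ring
    rw [sum_composition_succ, sum_range_succ, hlast, sum_congr rfl hfirst,
      sum_range_sub' fun p => (1 : ℚ) / p.factorial]
    simp

lemma sum_w (n : ℕ) :
    ∑ c : Composition (n + 1), (w c.blocks : ℚ) / ((c.blocks.map Nat.factorial).prod : ℕ) =
      ∑ i ∈ range (n + 1), 1 / (i.factorial : ℚ) := by
  rw [sum_composition_succ n fun l => (w l : ℚ) / ((l.map Nat.factorial).prod : ℕ)]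
  refine sum_congr rfl fun p hp => ?_
  rcases (Nat.lt_succ_iff.1 (mem_range.1 hp)).eq_or_lt with rfl | hlt
  · rw [Nat.sub_self, sum_composition_zero
      fun l => (w ((p + 1) :: l) : ℚ) / ((((p + 1) :: l).map Nat.factorial).prod : ℕ),
      ← succ_div_factorial]
    simp [w]
  · rw [sum_congr rfl fun c _ => w_cons (p + 1) (blocks_ne_nil (by omega) c), ← mul_sum]
    obtain ⟨m, hm⟩ : ∃ m, n - p = m + 1 := ⟨n - p - 1, by omega⟩
    rw [hm, sum_tailWeight, succ_div_factorial, mul_one]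

/-- The natural-number division in a multinomial coefficient is exact. -/
lemma prod_factorial_dvd (l : List ℕ) : (l.map Nat.factorial).prod ∣ l.sum.factorial := by
  induction l with
  | nil => simp
  | cons a l ih =>
    rw [List.map_cons, List.prod_cons, List.sum_cons]
    exact (mul_dvd_mul_left _ ih).trans (Nat.factorial_mul_factorial_dvd_factorial_add _ _)

/-- For every `n ≥ 1`, the sum over all compositions `(p₁,…,p_k)` of `n` of
`(n!/(p₁!⋯p_k!))·w(p₁,…,p_k)` equals `Σ_{i=0}^{n-1} n!/i!`. -/
theorem sum_composition_multinomial_weight (n : ℕ) (hn : 1 ≤ n) :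
    ∑ c : Composition n,
        (n.factorial / (c.blocks.map Nat.factorial).prod) * w c.blocks =
      ∑ i ∈ Finset.range n, n.factorial / i.factorial := by
  obtain ⟨m, rfl⟩ : ∃ m, n = m + 1 := ⟨n - 1, by omega⟩
  rw [← Nat.cast_inj (R := ℚ), Nat.cast_sum, Nat.cast_sum]
  have hL (c : Composition (m + 1)) :
      (((m + 1).factorial / (c.blocks.map Nat.factorial).prod * w c.blocks : ℕ) : ℚ) =
        (m + 1).factorial * ((w c.blocks : ℚ) / ((c.blocks.map Nat.factorial).prod : ℕ)) := by
    have hd := prod_factorial_dvd c.blocks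
    rw [c.blocks_sum] at hd
    rw [Nat.cast_mul, Nat.cast_div_charZero hd]
    ring
  have hR : ∀ i ∈ range (m + 1), (((m + 1).factorial / i.factorial : ℕ) : ℚ) =
      (m + 1).factorial * (1 / (i.factorial : ℚ)) := by
    intro i hi
    rw [Nat.cast_div_charZero (Nat.factorial_dvd_factorial (mem_range.1 hi).le)]
    ring
  rw [sum_congr rfl fun c _ => hL c, sum_congr rfl hR, ← mul_sum, ← mul_sum, sum_w]
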